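/- Let ℓ ∈ ℕ and p > 1. The range of the ℓ-th discrete gradient restricted to H_0^ℓ, i.e., the set {∇^ℓ u | u ∈ H_0^ℓ}, is dense in H^{ℓ,p} with respect to the ℓ^p-norm. -/

import Mathlib

open scoped BigOperators
open Finset Filter Asymptotics

noncomputable section

/-- Discrete gradient of a complex sequence: `(∇u)_n = u_n - u_{n-1}`. -/
def dgrad (u : ℤ → ℂ) : ℤ → ℂ := fun n => u n - u (n - 1)

/-- Discrete divergence of a complex sequence: `(div u)_n = u_{n+1} - u_n`. -/
def ddiv (u : ℤ → ℂ) : ℤ → ℂ := fun n => u (n + 1) - u n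

/-- Discrete gradient of a real sequence. -/
def rgrad (g : ℤ → ℝ) : ℤ → ℝ := fun n => g n - g (n - 1)

/-- Discrete divergence of a real sequence. -/
def rdiv (g : ℤ → ℝ) : ℤ → ℝ := fun n => g (n + 1) - g n

/-- `v^⟨a⟩ := v * |v|^(a-1)`, with `0^⟨a⟩ = 0`. -/
def sgnPow (a v : ℝ) : ℝ := v * |v| ^ (a - 1)

/-- The discrete `p`-Laplacian of order `m`:
`(-Δ_p^{(m)} g)_n = (-1)^m (div^m ((∇^m g)^⟨p-1⟩))_n`. -/
def pLap (p : ℝ) (m : ℕ) (g : ℤ → ℝ) : ℤ → ℝ :=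
  fun n => (-1 : ℝ) ^ m * rdiv^[m] (fun k => sgnPow (p - 1) (rgrad^[m] g k)) n

/-- The remainder term `R(s; g, u)_n` (the exponent `p` is a separate parameter). -/
def Rem (p s : ℝ) (g : ℤ → ℝ) (u : ℤ → ℂ) (n : ℤ) : ℝ :=
  if s ≤ 2 then
    ‖(Real.sqrt (g n / g (n + 1)) : ℂ) * u (n + 1)
        - (Real.sqrt (g (n + 1) / g n) : ℂ) * u n‖ ^ p
  else
    ‖(Real.sqrt (g n / g (n + 1)) : ℂ) * u (n + 1)
        - (Real.sqrt (g (n + 1) / g n) : ℂ) * u n‖ ^ (2 : ℝ)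
      * (‖ddiv u n‖ + ‖u n‖ / g n * rdiv g n) ^ (p - 2)

/-- `∑_{n=a}^∞ f(n)` as a `tsum` over `ℕ`. -/
def tsumFrom (a : ℤ) (f : ℤ → ℝ) : ℝ := ∑' n : ℕ, f (a + n)

/-!
The backward difference is `∇ = 1 - S`, where `S` is the right shift of `ℓ^q`, so
`x - N⁻¹ ∑_{j < N} S^j x` lies in the range of `∇`. For a unit sequence `x` the average has norm
`N ^ (1 / q - 1) ‖x‖`, which tends to zero exactly because `q > 1`. Hence the space `F` of finitely
supported sequences vanishing below `a` is contained in the closure of `∇ F`, and by continuity in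
the closure of `∇^m F` for every `m`.
-/

open scoped ENNReal Topology

section ClosureOfImage

variable {R M : Type*}

theorem le_topologicalClosure_map_pow [Semiring R] [AddCommMonoid M] [TopologicalSpace M]
    [Module R M] [ContinuousAdd M] [ContinuousConstSMul R M] {T : M →L[R] M} {F : Submodule R M}
    (h : F ≤ (F.map T.toLinearMap).topologicalClosure) (m : ℕ) :
    F ≤ (F.map (T ^ m).toLinearMap).topologicalClosure := by
  induction m with
  | zero => exact fun x hx => Submodule.le_topologicalClosure _ ⟨x, hx, rfl⟩
  | succ m ih =>
    refine h.trans (Submodule.topologicalClosure_minimal _ ?_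
      (Submodule.isClosed_topologicalClosure _))
    rintro _ ⟨x, hx, rfl⟩
    refine map_mem_closure T.continuous (ih hx) ?_
    rintro _ ⟨u, hu, rfl⟩
    exact ⟨u, hu, by rw [pow_succ']; rfl⟩

section BirkhoffAverage

theorem sub_iterate_mem_map_one_sub [Ring R] [AddCommGroup M] [Module R M] {F : Submodule R M}
    {x : M} {S : M →ₗ[R] M} (hS : Set.MapsTo S F F) (hx : x ∈ F) (n : ℕ) :
    x - S^[n] x ∈ F.map (1 - S) := by
  refine ⟨birkhoffSum S id n x, F.sum_mem fun k _ => hS.iterate k hx, ?_⟩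
  have apply_birkhoffSum : S (birkhoffSum S id n x) = birkhoffSum S id n (S x) := by
    simp only [birkhoffSum, map_sum, id, ← Function.iterate_succ_apply,
      ← Function.iterate_succ_apply']
  rw [LinearMap.sub_apply, Module.End.one_apply, apply_birkhoffSum, ← neg_sub,
    birkhoffSum_apply_sub_birkhoffSum, neg_sub, id, id]

variable [DivisionRing R] [CharZero R] [AddCommGroup M] [Module R M] {F : Submodule R M} {x : M}

theorem sub_birkhoffAverage_mem_map_one_sub {S : M →ₗ[R] M} (hS : Set.MapsTo S F F)
    (hx : x ∈ F) {n : ℕ} (hn : n ≠ 0) : x - birkhoffAverage R S id n x ∈ F.map (1 - S) := by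
  have average_sub : x - birkhoffAverage R S id n x =
      (n : R)⁻¹ • ∑ k ∈ range n, (x - S^[k] x) := by
    rw [sum_sub_distrib, sum_const, card_range, smul_sub, ← Nat.cast_smul_eq_nsmul R,
      inv_smul_smul₀ (Nat.cast_ne_zero.2 hn)]
    rfl
  rw [average_sub]
  exact Submodule.smul_mem _ _ (Submodule.sum_mem _ fun k _ => sub_iterate_mem_map_one_sub hS hx k)

theorem mem_topologicalClosure_map_one_sub_of_tendsto_birkhoffAverage
    [TopologicalSpace M] [IsTopologicalAddGroup M] [ContinuousConstSMul R M] {S : M →L[R] M}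
    (hS : Set.MapsTo S F F) (hx : x ∈ F)
    (h : Tendsto (birkhoffAverage R S id · x) atTop (𝓝 0)) :
    x ∈ (F.map (1 - S).toLinearMap).topologicalClosure := by
  refine mem_closure_of_tendsto (by simpa only [sub_zero] using h.const_sub x) ?_
  filter_upwards [eventually_ne_atTop 0] with n hn
  exact sub_birkhoffAverage_mem_map_one_sub (S := S.toLinearMap) hS hx hn

end BirkhoffAverage

end ClosureOfImage

section SequenceSpace

variable {ι κ E : Type*} [NormedAddCommGroup E] {q : ℝ≥0∞}

theorem memℓp_comp_equiv {f : κ → E} (hf : Memℓp f q) (e : ι ≃ κ) : Memℓp (f ∘ e) q := by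
  rcases q.trichotomy with rfl | rfl | hq
  · exact memℓp_zero (hf.finite_dsupport.preimage e.injective.injOn)
  · exact memℓp_infty (hf.bddAbove.mono (Set.range_comp_subset_range e (‖f ·‖)))
  · exact memℓp_gen (e.summable_iff.2 (hf.summable hq))

section Single

variable [DecidableEq ι]

theorem norm_sum_single_const (hq : 0 < q.toReal) (s : Finset ι) (c : E) :
    ‖∑ i ∈ s, lp.single (E := fun _ => E) q i c‖ = (#s : ℝ) ^ (1 / q.toReal) * ‖c‖ := by
  have h := lp.norm_sum_single (E := fun _ => E) hq (fun _ => c) s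
  rw [sum_const, nsmul_eq_mul] at h
  rw [← Real.rpow_rpow_inv (lp.norm_nonneg' _) hq.ne', h,
    Real.mul_rpow (by positivity) (by positivity), Real.rpow_rpow_inv (norm_nonneg c) hq.ne',
    one_div]

theorem tendsto_average_single [NormedSpace ℝ E] [Fact (1 ≤ q)] (hq : 1 < q.toReal)
    {k : ℕ → ι} (hk : k.Injective) (c : E) :
    Tendsto (fun n : ℕ => (n : ℝ)⁻¹ • ∑ j ∈ range n, lp.single (E := fun _ => E) q (k j) c)
      atTop (𝓝 0) := by
  have hq0 : 0 < q.toReal := one_pos.trans hq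
  have hexp : 0 < 1 - 1 / q.toReal := sub_pos.2 ((div_lt_one hq0).2 hq)
  have decay : Tendsto (fun n : ℕ => (n : ℝ) ^ (-(1 - 1 / q.toReal)) * ‖c‖) atTop (𝓝 0) := by
    simpa only [zero_mul, Function.comp_apply] using
      ((tendsto_rpow_neg_atTop hexp).comp tendsto_natCast_atTop_atTop).mul_const ‖c‖
  refine tendsto_zero_iff_norm_tendsto_zero.2 (decay.congr' ?_)
  filter_upwards [eventually_gt_atTop 0] with n hn
  have norm_sum := norm_sum_single_const hq0 ((range n).map ⟨k, hk⟩) c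
  rw [sum_map, card_map, card_range] at norm_sum
  simp only [Function.Embedding.coeFn_mk] at norm_sum
  rw [norm_smul, norm_sum, norm_inv, Real.norm_natCast, ← mul_assoc, neg_sub,
    Real.rpow_sub_one (Nat.cast_pos.2 hn).ne', div_eq_inv_mul]

end Single

variable [NormedSpace ℝ E]

section FiniteSupport

variable (E q) in
/-- The finitely supported elements of `ℓ^q(ι, E)` whose support is contained in `s`. For `ι = ℤ`,
`E = ℂ` and `s = [ℓ, ∞)` this is the space `H_0^ℓ`. -/
def lpFiniteSupport (s : Set ι) : Submodule ℝ (lp (fun _ : ι => E) q) where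
  carrier := {f | Function.support f ⊆ s ∧ (Function.support f).Finite}
  zero_mem' := by
    rw [Set.mem_ofPred_eq, lp.coeFn_zero, Function.support_zero]
    exact ⟨Set.empty_subset s, Set.finite_empty⟩
  add_mem' := fun {f g} hf hg =>
    ⟨(Function.support_add f g).trans (Set.union_subset hf.1 hg.1),
      (hf.2.union hg.2).subset (Function.support_add f g)⟩
  smul_mem' c f hf :=
    ⟨(Function.support_const_smul_subset c f).trans hf.1,
      hf.2.subset (Function.support_const_smul_subset c f)⟩

variable [DecidableEq ι] {s : Set ι}

theorem single_mem_lpFiniteSupport {i : ι} (hi : i ∈ s) (c : E) :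
    lp.single q i c ∈ lpFiniteSupport E q s :=
  ⟨Pi.support_single_subset.trans (Set.singleton_subset_iff.2 hi),
    (Set.finite_singleton i).subset Pi.support_single_subset⟩

theorem mem_of_isClosed_of_single_mem [Fact (1 ≤ q)] (hq : q ≠ ∞)
    {K : Submodule ℝ (lp (fun _ : ι => E) q)} (hK : IsClosed (K : Set (lp (fun _ : ι => E) q)))
    (h : ∀ i ∈ s, ∀ c, lp.single q i c ∈ K)
    {f : lp (fun _ : ι => E) q} (hf : Function.support f ⊆ s) : f ∈ K := by
  refine hK.mem_of_tendsto (lp.hasSum_single hq f) (.of_forall fun t => K.sum_mem fun i _ => ?_)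
  by_cases hi : i ∈ s
  · exact h i hi _
  · rw [Function.support_subset_iff'.1 hf i hi, lp.single_zero]
    exact K.zero_mem

end FiniteSupport

section Difference

/-- The backward difference operator `(∇u)_n = u_n - u_{n-1}` on sequences with values in `E`;
for `E = ℂ` it is `dgrad`. -/
def bwdDiff {G : Type*} [Sub G] (u : ℤ → G) : ℤ → G := fun n => u n - u (n - 1)

variable [Fact (1 ≤ q)]

variable (E q) in
/-- Reindexing along a bijection, as a linear isometry of `ℓ^q`-spaces. -/
def lpReindex (e : ι ≃ κ) : lp (fun _ : κ => E) q →ₗᵢ[ℝ] lp (fun _ : ι => E) q where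
  toFun f := ⟨f ∘ e, memℓp_comp_equiv (lp.memℓp f) e⟩
  map_add' _ _ := rfl
  map_smul' _ _ := rfl
  norm_map' f := by
    rcases q.dichotomy with rfl | hq
    · exact e.surjective.iSup_comp (‖f ·‖)
    · have hq0 : 0 < q.toReal := one_pos.trans_le hq
      rw [lp.norm_eq_tsum_rpow hq0, lp.norm_eq_tsum_rpow hq0]
      exact congrArg (· ^ (1 / q.toReal)) (e.tsum_eq fun i => ‖f i‖ ^ q.toReal)

variable (E q) in
/-- The right shift `(Sf)_n = f_{n-1}` on `ℓ^q(ℤ, E)`. -/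
def lpShift : lp (fun _ : ℤ => E) q →L[ℝ] lp (fun _ : ℤ => E) q :=
  (lpReindex E q (Equiv.subRight 1)).toContinuousLinearMap

theorem lpShift_apply (f : lp (fun _ : ℤ => E) q) (n : ℤ) : lpShift E q f n = f (n - 1) :=
  rfl

theorem iterate_lpShift_single (k : ℤ) (c : E) (n : ℕ) :
    (lpShift E q)^[n] (lp.single q k c) = lp.single q (k + n) c := by
  induction n with
  | zero => simp
  | succ n ih =>
    rw [Function.iterate_succ_apply', ih, Nat.cast_succ, ← add_assoc]
    ext j
    simp only [lpShift_apply, lp.single_apply, Pi.single_apply, sub_eq_iff_eq_add]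

theorem mapsTo_lpShift_lpFiniteSupport (a : ℤ) :
    Set.MapsTo (lpShift E q) (lpFiniteSupport E q (Set.Ici a)) (lpFiniteSupport E q (Set.Ici a)) :=
  fun _ hf => ⟨fun n hn => (hf.1 hn : a ≤ n - 1).trans (sub_le_self n zero_le_one),
    hf.2.preimage (Equiv.subRight (1 : ℤ)).injective.injOn⟩

theorem coeFn_one_sub_lpShift_pow (m : ℕ) (f : lp (fun _ : ℤ => E) q) :
    ⇑(((1 - lpShift E q) ^ m) f) = bwdDiff^[m] f := by
  induction m with
  | zero => rfl
  | succ m ih =>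
    rw [pow_succ', Function.iterate_succ_apply', ← ih]
    rfl

theorem single_mem_closure_map_one_sub_lpShift (hq : 1 < q.toReal) {a k : ℤ} (hk : a ≤ k) (c : E) :
    lp.single q k c ∈ ((lpFiniteSupport E q (Set.Ici a)).map
      (1 - lpShift E q).toLinearMap).topologicalClosure := by
  refine mem_topologicalClosure_map_one_sub_of_tendsto_birkhoffAverage
    (mapsTo_lpShift_lpFiniteSupport a) (single_mem_lpFiniteSupport (Set.mem_Ici.2 hk) c) ?_
  simpa only [birkhoffAverage, birkhoffSum, iterate_lpShift_single, id, Function.comp_apply] using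
    tendsto_average_single hq ((add_right_injective k).comp Nat.cast_injective) c

theorem lpFiniteSupport_le_closure_map_one_sub_lpShift (hq : 1 < q.toReal) (a : ℤ) :
    lpFiniteSupport E q (Set.Ici a) ≤ ((lpFiniteSupport E q (Set.Ici a)).map
      (1 - lpShift E q).toLinearMap).topologicalClosure := fun _ hf =>
  mem_of_isClosed_of_single_mem (ENNReal.toReal_pos_iff.1 (one_pos.trans hq)).2.ne
    (Submodule.isClosed_topologicalClosure _)
    (fun _ hk c => single_mem_closure_map_one_sub_lpShift hq hk c) hf.1

theorem mem_closure_map_one_sub_lpShift_pow (hq : 1 < q.toReal) {a : ℤ}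
    {f : lp (fun _ : ℤ => E) q} (hf : Function.support f ⊆ Set.Ici a) (m : ℕ) :
    f ∈ ((lpFiniteSupport E q (Set.Ici a)).map
      ((1 - lpShift E q) ^ m).toLinearMap).topologicalClosure :=
  mem_of_isClosed_of_single_mem (ENNReal.toReal_pos_iff.1 (one_pos.trans hq)).2.ne
    (Submodule.isClosed_topologicalClosure _)
    (fun _ hk c => le_topologicalClosure_map_pow
      (lpFiniteSupport_le_closure_map_one_sub_lpShift hq a) m (single_mem_lpFiniteSupport hk c)) hf

end Difference

end SequenceSpace

theorem stmt_17_general {E : Type*} [NormedAddCommGroup E] [NormedSpace ℝ E] (a : ℤ) (m : ℕ)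
    {p : ℝ} (hp : 1 < p) {v : ℤ → E} (hv : ∀ n < a, v n = 0)
    (hsum : Summable fun n => ‖v n‖ ^ p) {ε : ℝ} (hε : 0 < ε) :
    ∃ u : ℤ → E, (∀ n < a, u n = 0) ∧ (Function.support u).Finite ∧
      (∑' n, ‖bwdDiff^[m] u n - v n‖ ^ p) ^ (1 / p) < ε := by
  obtain ⟨q, rfl⟩ : ∃ q : ℝ≥0∞, q.toReal = p := ⟨.ofReal p, ENNReal.toReal_ofReal (by positivity)⟩
  have hq0 : 0 < q.toReal := one_pos.trans hp
  have : Fact (1 ≤ q) :=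
    ⟨by simpa only [ENNReal.ofReal_one] using ENNReal.ofReal_le_of_le_toReal hp.le⟩
  have support_subset_Ici (w : ℤ → E) : Function.support w ⊆ Set.Ici a ↔ ∀ n < a, w n = 0 := by
    simp only [Function.support_subset_iff', Set.mem_Ici, not_le]
  obtain ⟨_, ⟨u, hu, rfl⟩, hdist⟩ := Metric.mem_closure_iff.1
    (mem_closure_map_one_sub_lpShift_pow (f := ⟨v, memℓp_gen hsum⟩) hp
      ((support_subset_Ici v).2 hv) m) ε hε
  refine ⟨u, (support_subset_Ici u).1 hu.1, hu.2, ?_⟩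
  rw [dist_comm, dist_eq_norm, lp.norm_eq_tsum_rpow hq0] at hdist
  rw [← coeFn_one_sub_lpShift_pow]
  exact hdist

/-- Lemma 3.5: the range `{∇^ℓ u | u ∈ H_0^ℓ}` of the `ℓ`-th discrete
gradient restricted to `H_0^ℓ` is dense in `H^{ℓ,p} = H^ℓ ∩ ℓ^p(ℤ)` with respect to the
`ℓ^p`-norm. -/
theorem stmt_17 (ℓ : ℕ) (hℓ : 0 < ℓ) (p : ℝ) (hp : 1 < p) :
    ∀ v : ℤ → ℂ,
      (∀ n : ℤ, n < (ℓ : ℤ) → v n = 0) →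
      Summable (fun n : ℤ => ‖v n‖ ^ p) →
      ∀ ε : ℝ, 0 < ε →
        ∃ u : ℤ → ℂ,
          (∀ n : ℤ, n < (ℓ : ℤ) → u n = 0) ∧
          (Function.support u).Finite ∧
          (∑' n : ℤ, ‖dgrad^[ℓ] u n - v n‖ ^ p) ^ (1 / p) < ε :=
  fun _ hv hsum _ hε => stmt_17_general ℓ ℓ hp hv hsum hε
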